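/- Let F be a symmetric subset of the unitary group U(ℓ₂), closed in the strong operator topology, and let (Uₙ) be a sequence of unitaries such that U(ℓ₂) is generated as a group by F together with {Uₙ : n ∈ ℕ}. Then there is a finite n such that (F ∪ {1, U₀, U₀*, ..., Uₙ, Uₙ*})ⁿ = U(ℓ₂). -/

import Mathlib

open Pointwise

/-!
It suffices that every length function `p` on the isometry group of `H` is bounded: applied to
`g ↦ min {n | g ∈ Sₙⁿ}` with `Sₙ = F ∪ {1, U₀, U₀⁻¹, …, Uₙ, Uₙ⁻¹}`, this is the claim.

Decompose `H` into copies of itself indexed by `ℕ × ℤ`. A diagonal argument over block-diagonal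
isometries, trivial for `k < 0` and constant for `k ≥ 0` on each row, gives a row `n` on which
every isometry `v` is repeated by a block-diagonal isometry of length at most `n`. Its commutator
with the shift of row `n` acts as `v` on the block `(n, 0)` and trivially elsewhere, so `p` is
bounded on the isometries supported on one block. By conjugacy, `p` is bounded on the pointwise
stabilizer of every orthonormal sequence with infinite-dimensional orthogonal complement. Finally,
every isometry is a product of two elements of such stabilizers, whose bounds can be chosen
uniformly (Ricard and Rosendal, *On the algebraic structure of the unitary group*).
-/

section StronglyBounded

variable {G G' : Type*} [Group G] [Group G']

/-- A group is strongly bounded if all its length functions are bounded; equivalently, if all its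
isometric actions on metric spaces have bounded orbits. -/
def IsStronglyBounded (G : Type*) [Group G] : Prop :=
  ∀ p : GroupSeminorm G, BddAbove (Set.range p)

theorem IsStronglyBounded.of_surjective (hG : IsStronglyBounded G) {f : G →* G'}
    (hf : Function.Surjective f) : IsStronglyBounded G' := by
  intro p
  simpa [hf.range_comp] using hG (p.comp f)

theorem IsStronglyBounded.exists_eq_univ (hG : IsStronglyBounded G) {W : ℕ → Set G}
    (hmono : Monotone W) (hone : 1 ∈ W 0) (hinv : ∀ n, (W n)⁻¹ = W n)
    (hmul : ∀ m n, W m * W n ⊆ W (m + n)) (hcover : ⋃ n, W n = Set.univ) :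
    ∃ n, W n = Set.univ := by
  classical
  have hex : ∀ g, ∃ n, g ∈ W n := fun g => Set.mem_iUnion.1 (hcover ▸ Set.mem_univ g)
  let p : GroupSeminorm G :=
    { toFun := fun g => Nat.find (hex g)
      map_one' := by simpa using hone
      mul_le' := fun g h => mod_cast Nat.find_min' _
        (hmul _ _ (Set.mul_mem_mul (Nat.find_spec (hex g)) (Nat.find_spec (hex h))))
      inv' := fun g => by simp only [← Set.mem_inv, hinv] }
  obtain ⟨C, hC⟩ := hG p
  obtain ⟨n, hn⟩ := exists_nat_ge C
  refine ⟨n, Set.eq_univ_of_forall fun g => ?_⟩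
  have hle : (Nat.find (hex g) : ℝ) ≤ n := (hC (Set.mem_range_self g)).trans hn
  exact hmono (mod_cast hle) (Nat.find_spec (hex g))

theorem iUnion_pow_eq_univ_of_closure_eq_top {S : ℕ → Set G} (hmono : Monotone S)
    (hone : 1 ∈ S 0) (hinv : ∀ n, (S n)⁻¹ = S n) (hgen : Subgroup.closure (⋃ n, S n) = ⊤) :
    ⋃ n, S n ^ n = Set.univ := by
  have hone' : ∀ n, 1 ∈ S n := fun n => hmono n.zero_le hone
  refine Set.eq_univ_of_forall fun g => Set.mem_iUnion.2 ?_
  have hg : g ∈ Subgroup.closure (⋃ n, S n) := hgen ▸ Subgroup.mem_top g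
  induction hg using Subgroup.closure_induction with
  | mem x hx =>
    obtain ⟨n, hn⟩ := Set.mem_iUnion.1 hx
    exact ⟨n + 1, Set.subset_pow (hone' _) n.succ_ne_zero (hmono n.le_succ hn)⟩
  | one => exact ⟨0, by simp⟩
  | mul x y _ _ hx hy =>
    obtain ⟨⟨m, hm⟩, n, hn⟩ := hx, hy
    refine ⟨m + n, pow_add (S (m + n)) m n ▸ Set.mul_mem_mul ?_ ?_⟩
    · exact Set.pow_subset_pow_left (hmono (Nat.le_add_right m n)) hm
    · exact Set.pow_subset_pow_left (hmono (Nat.le_add_left n m)) hn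
  | inv x _ hx =>
    obtain ⟨n, hn⟩ := hx
    exact ⟨n, by rwa [← Set.mem_inv, ← inv_pow, hinv]⟩

theorem IsStronglyBounded.exists_pow_eq_univ (hG : IsStronglyBounded G) {S : ℕ → Set G}
    (hmono : Monotone S) (hone : 1 ∈ S 0) (hinv : ∀ n, (S n)⁻¹ = S n)
    (hgen : Subgroup.closure (⋃ n, S n) = ⊤) : ∃ n, S n ^ n = Set.univ := by
  refine hG.exists_eq_univ (W := fun n => S n ^ n) (fun m n hmn => ?_) (by simp)
    (fun n => by rw [← inv_pow, hinv]) (fun m n => ?_)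
    (iUnion_pow_eq_univ_of_closure_eq_top hmono hone hinv hgen)
  · exact Set.pow_subset_pow (hmono hmn) (hmono n.zero_le hone) hmn
  · rw [pow_add]
    exact Set.mul_subset_mul (Set.pow_subset_pow_left (hmono (Nat.le_add_right m n)))
      (Set.pow_subset_pow_left (hmono (Nat.le_add_left n m)))

theorem IsStronglyBounded.exists_pow_union_eq_univ (hG : IsStronglyBounded G) {F : Set G}
    (hF : F⁻¹ = F) (U : ℕ → G) (hgen : Subgroup.closure (F ∪ Set.range U) = ⊤) :
    ∃ n : ℕ, (F ∪ {1} ∪ ⋃ i ∈ Finset.range (n + 1), {U i, (U i)⁻¹}) ^ n = Set.univ := by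
  refine hG.exists_pow_eq_univ (S := fun n => F ∪ {1} ∪ ⋃ i ∈ Finset.range (n + 1), {U i, (U i)⁻¹})
    (fun m n hmn => ?_) (by simp) (fun n => ?_) ?_
  · have : Finset.range (m + 1) ⊆ Finset.range (n + 1) := Finset.range_mono (by lia)
    exact Set.union_subset_union_right _ (Set.biUnion_subset_biUnion_left this)
  · simp [Set.union_inv, Set.iUnion_inv, Set.inv_insert, hF, Set.pair_comm]
  · refine top_unique (hgen ▸ Subgroup.closure_mono (Set.union_subset ?_ ?_))
    · exact fun g hg => Set.mem_iUnion.2 ⟨0, .inl (.inl hg)⟩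
    · rintro _ ⟨i, rfl⟩
      exact Set.mem_iUnion.2 ⟨i, .inr (Set.mem_biUnion (by simp) (Set.mem_insert _ _))⟩

theorem exists_nat_forall_exists_apply_eq_and_le {X : ℕ → Type*} (f : (∀ n, X n) → ℝ) :
    ∃ n : ℕ, ∀ v : X n, ∃ w : ∀ n, X n, w n = v ∧ f w ≤ n := by
  by_contra! h
  choose v hv using h
  obtain ⟨n, hn⟩ := exists_nat_ge (f v)
  exact (hv n v rfl).not_ge hn

theorem le_two_mul_add_conj (p : GroupSeminorm G) (h g : G) :
    p g ≤ 2 * p h + p (h * g * h⁻¹) := by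
  calc p g = p (h⁻¹ * (h * g * h⁻¹) * h) := by group
    _ ≤ p h⁻¹ + p (h * g * h⁻¹) + p h := by
        grw [map_mul_le_add, map_mul_le_add]
    _ = 2 * p h + p (h * g * h⁻¹) := by rw [map_inv_eq_map]; ring

end StronglyBounded

section HilbertSpace

variable {𝕜 E F ι κ : Type*} [RCLike 𝕜] [NormedAddCommGroup E] [InnerProductSpace 𝕜 E]
  [NormedAddCommGroup F] [InnerProductSpace 𝕜 F]

theorem countable_of_orthonormal [TopologicalSpace.SeparableSpace E] {e : ι → E}
    (he : Orthonormal 𝕜 e) : Countable ι := by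
  refine Pairwise.countable_of_isOpen_disjoint (s := fun i => Metric.ball (e i) (1 / 2))
    (fun i j hij => Metric.ball_disjoint_ball ?_) (fun _ => Metric.isOpen_ball)
    (fun i => ⟨e i, by simp⟩)
  have h : ‖e i - e j‖ ^ 2 = 2 := by
    rw [@norm_sub_sq 𝕜, he.1 i, he.1 j, he.2 hij]
    norm_num
  rw [dist_eq_norm]
  nlinarith [norm_nonneg (e i - e j)]

theorem not_finiteDimensional_of_orthonormal [Infinite ι] {K : Submodule 𝕜 E} {x : ι → E}
    (hx : Orthonormal 𝕜 x) (hxK : ∀ i, x i ∈ K) : ¬ FiniteDimensional 𝕜 K := by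
  intro _
  have : LinearIndependent 𝕜 fun i => (⟨x i, hxK i⟩ : K) :=
    .of_comp K.subtype hx.linearIndependent
  exact not_finite_iff_infinite.2 ‹_› this.finite

theorem orthonormal_sumElim_iff {e : ι → E} {f : κ → E} :
    Orthonormal 𝕜 (Sum.elim e f) ↔
      Orthonormal 𝕜 e ∧ Orthonormal 𝕜 f ∧ ∀ i j, inner 𝕜 (e i) (f j) = 0 := by
  simp only [Orthonormal, Pairwise, Sum.forall, Sum.elim_inl, Sum.elim_inr, ne_eq,
    Sum.inl.injEq, Sum.inr.injEq, reduceCtorEq, not_false_eq_true, forall_true_left,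
    inner_eq_zero_symm (x := f _) (y := e _)]
  grind

theorem orthonormal_sumElim_comm {e : ι → E} {f : κ → E} :
    Orthonormal 𝕜 (Sum.elim e f) ↔ Orthonormal 𝕜 (Sum.elim f e) := by
  simp only [orthonormal_sumElim_iff, inner_eq_zero_symm (x := e _)]
  grind

theorem orthonormal_sumElim_left_comm {μ : Type*} {e : ι → E} {f : κ → E} {g : μ → E} :
    Orthonormal 𝕜 (Sum.elim (Sum.elim e f) g) ↔ Orthonormal 𝕜 (Sum.elim (Sum.elim f e) g) := by
  rw [orthonormal_sumElim_iff, orthonormal_sumElim_comm, orthonormal_sumElim_iff (f := g)]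
  simp only [Sum.forall, Sum.elim_inl, Sum.elim_inr, and_comm]

theorem orthonormal_sumElim_right_comm {μ : Type*} {e : ι → E} {f : κ → E} {g : μ → E} :
    Orthonormal 𝕜 (Sum.elim (Sum.elim e f) g) ↔ Orthonormal 𝕜 (Sum.elim (Sum.elim e g) f) := by
  simp only [orthonormal_sumElim_iff, Sum.forall, Sum.elim_inl, Sum.elim_inr,
    inner_eq_zero_symm (x := f _)]
  grind

theorem orthonormal_sumElim_of_mem_span {μ : Type*} {e : ι → E} {f : κ → E} {f' : μ → E}
    (hef : Orthonormal 𝕜 (Sum.elim e f)) (hf' : Orthonormal 𝕜 f')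
    (hmem : ∀ j, f' j ∈ Submodule.span 𝕜 (Set.range f)) : Orthonormal 𝕜 (Sum.elim e f') := by
  obtain ⟨he, -, hortho⟩ := orthonormal_sumElim_iff.1 hef
  refine orthonormal_sumElim_iff.2 ⟨he, hf', fun i j => ?_⟩
  have hle : Submodule.span 𝕜 (Set.range f) ≤ (𝕜 ∙ e i)ᗮ := Submodule.span_le.2 <| by
    rintro _ ⟨k, rfl⟩
    exact Submodule.mem_orthogonal_singleton_iff_inner_right.2 (hortho i k)
  exact Submodule.mem_orthogonal_singleton_iff_inner_right.1 (hle (hmem j))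

theorem isOrtho_topologicalClosure {K L : Submodule 𝕜 E} (h : K ⟂ L) :
    K.topologicalClosure ⟂ L.topologicalClosure := by
  rw [Submodule.isOrtho_iff_le, Submodule.orthogonal_closure]
  exact K.topologicalClosure_minimal h L.isClosed_orthogonal

theorem exists_unit_vector_inner_eq_zero {K : Submodule 𝕜 E} (hK : ¬ FiniteDimensional 𝕜 K)
    {s : Set E} (hs : s.Finite) : ∃ x ∈ K, ‖x‖ = 1 ∧ ∀ y ∈ s, inner 𝕜 y x = 0 := by
  have := hs.to_subtype
  let φ : K →ₗ[𝕜] s → 𝕜 := LinearMap.pi fun y => (innerₛₗ 𝕜 (y : E)).comp K.subtype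
  have hφ : LinearMap.ker φ ≠ ⊥ := fun h =>
    hK (Module.Finite.of_injective φ (LinearMap.ker_eq_bot.1 h))
  obtain ⟨x, hx, hx0⟩ := Submodule.exists_mem_ne_zero_of_ne_bot hφ
  refine ⟨((‖(x : E)‖⁻¹ : ℝ) : 𝕜) • (x : E), K.smul_mem _ x.2, ?_, fun y hy => ?_⟩
  · simpa using norm_smul_inv_norm (𝕜 := 𝕜) (x := (x : E)) (by simpa using hx0)
  · have hyx : inner 𝕜 y (x : E) = 0 := congrFun (LinearMap.mem_ker.1 hx) ⟨y, hy⟩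
    rw [inner_smul_right, hyx, mul_zero]

theorem exists_orthonormal_inner_apply_eq_zero [CompleteSpace E] [CompleteSpace F]
    (T : E →L[𝕜] F) {K : Submodule 𝕜 E} {L : Submodule 𝕜 F} (hK : ¬ FiniteDimensional 𝕜 K)
    (hL : ¬ FiniteDimensional 𝕜 L) :
    ∃ (x : ℕ → E) (y : ℕ → F), Orthonormal 𝕜 x ∧ Orthonormal 𝕜 y ∧ (∀ n, x n ∈ K) ∧
      (∀ n, y n ∈ L) ∧ ∀ m n, inner 𝕜 (T (x m)) (y n) = 0 := by
  let r (p q : E × F) : Prop := inner 𝕜 p.1 q.1 = 0 ∧ inner 𝕜 p.2 q.2 = 0 ∧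
    inner 𝕜 (T p.1) q.2 = 0 ∧ inner 𝕜 (T q.1) p.2 = 0
  have : Std.Symm r := ⟨fun p q ⟨h₁, h₂, h₃, h₄⟩ =>
    ⟨inner_eq_zero_symm.1 h₁, inner_eq_zero_symm.1 h₂, h₄, h₃⟩⟩
  obtain ⟨f, hf, hr⟩ := exists_seq_of_forall_finset_exists'
    (fun p : E × F => p.1 ∈ K ∧ p.2 ∈ L ∧ ‖p.1‖ = 1 ∧ ‖p.2‖ = 1 ∧ inner 𝕜 (T p.1) p.2 = 0) r
    fun s _ => by
      obtain ⟨x, hxK, hx, hxs⟩ := exists_unit_vector_inner_eq_zero hK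
        ((s.finite_toSet.image Prod.fst).union (s.finite_toSet.image fun p => T.adjoint p.2))
      obtain ⟨y, hyL, hy, hys⟩ := exists_unit_vector_inner_eq_zero hL
        (((s.finite_toSet.image Prod.snd).union (s.finite_toSet.image fun p => T p.1)).insert (T x))
      refine ⟨(x, y), ⟨hxK, hyL, hx, hy, hys _ (.inl rfl)⟩, fun p hp => ⟨?_, ?_, ?_, ?_⟩⟩
      · exact hxs _ (.inl ⟨p, hp, rfl⟩)
      · exact hys _ (.inr (.inl ⟨p, hp, rfl⟩))
      · exact hys _ (.inr (.inr ⟨p, hp, rfl⟩))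
      · rw [inner_eq_zero_symm, ← ContinuousLinearMap.adjoint_inner_left]
        exact hxs _ (.inr ⟨p, hp, rfl⟩)
  refine ⟨fun n => (f n).1, fun n => (f n).2, ⟨fun n => (hf n).2.2.1, fun m n h => (hr h).1⟩,
    ⟨fun n => (hf n).2.2.2.1, fun m n h => (hr h).2.1⟩, fun n => (hf n).1, fun n => (hf n).2.1,
    fun m n => ?_⟩
  obtain rfl | h := eq_or_ne m n
  · exact (hf m).2.2.2.2
  · exact (hr h).2.2.1

section Basis

theorem exists_hilbertBasis_coe_eq_comp [CompleteSpace E] (b : HilbertBasis κ 𝕜 E) (σ : ι ≃ κ) :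
    ∃ c : HilbertBasis ι 𝕜 E, ⇑c = b ∘ σ := by
  have hspan : ⊤ ≤ (Submodule.span 𝕜 (Set.range (b ∘ σ))).topologicalClosure := by
    rw [σ.surjective.range_comp, b.dense_span]
  exact ⟨.mk (b.orthonormal.comp σ σ.injective) hspan, HilbertBasis.coe_mk _ _⟩

variable [TopologicalSpace.SeparableSpace E] [TopologicalSpace.SeparableSpace F]
  [CompleteSpace E] [CompleteSpace F]

theorem nonempty_hilbertBasis (hE : ¬ FiniteDimensional 𝕜 E) (ι : Type*) [Countable ι]
    [Infinite ι] : Nonempty (HilbertBasis ι 𝕜 E) := by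
  obtain ⟨w, b, -⟩ := exists_hilbertBasis 𝕜 E
  have : Countable w := countable_of_orthonormal b.orthonormal
  have : Infinite w := by
    by_contra hw
    have := @Fintype.ofFinite _ (not_infinite_iff_finite.1 hw)
    exact hE (Module.Finite.of_basis b.toOrthonormalBasis.toBasis)
  obtain ⟨σ⟩ := nonempty_equiv_of_countable (α := ι) (β := w)
  obtain ⟨c, -⟩ := exists_hilbertBasis_coe_eq_comp b σ
  exact ⟨c⟩

theorem nonempty_linearIsometryEquiv (hE : ¬ FiniteDimensional 𝕜 E)
    (hF : ¬ FiniteDimensional 𝕜 F) : Nonempty (E ≃ₗᵢ[𝕜] F) := by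
  obtain ⟨b⟩ := nonempty_hilbertBasis hE ℕ
  obtain ⟨c⟩ := nonempty_hilbertBasis hF ℕ
  exact ⟨b.repr.trans c.repr.symm⟩

theorem exists_hilbertBasis_extending {e : ι → E} {x : ℕ → E}
    (h : Orthonormal 𝕜 (Sum.elim e x)) :
    ∃ b : HilbertBasis (ι ⊕ ℕ) 𝕜 E, ∀ i, b (.inl i) = e i := by
  classical
  have hinj : Function.Injective (Sum.elim e x) := h.linearIndependent.injective
  have he : Function.Injective e := hinj.comp Sum.inl_injective
  obtain ⟨w, b, hw, hb⟩ := h.toSubtypeRange.exists_hilbertBasis_extension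
  rw [Set.Sum.elim_range, Set.union_subset_iff] at hw
  have hcountable : Countable w := countable_of_orthonormal b.orthonormal
  have hsub : Set.range x ⊆ w \ Set.range e := by
    rintro _ ⟨n, rfl⟩
    exact ⟨hw.2 ⟨n, rfl⟩, fun ⟨i, hi⟩ => Sum.inl_ne_inr (hinj hi)⟩
  have : Countable ↥(w \ Set.range e) := (Set.Countable.mono Set.sdiff_subset hcountable).to_subtype
  have : Infinite ↥(w \ Set.range e) :=
    ((Set.infinite_range_of_injective (hinj.comp Sum.inr_injective)).mono hsub).to_subtype
  obtain ⟨τ⟩ := nonempty_equiv_of_countable (α := ℕ) (β := ↥(w \ Set.range e))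
  obtain ⟨c, hc⟩ := exists_hilbertBasis_coe_eq_comp b
    (((Equiv.ofInjective e he).sumCongr τ).trans (Equiv.Set.sumDiffSubset hw.1))
  exact ⟨c, fun i => by simp [hc, hb]⟩

theorem exists_linearIsometryEquiv_apply_eq {e : ι → E} {f : ι → F} {x : ℕ → E} {y : ℕ → F}
    (hex : Orthonormal 𝕜 (Sum.elim e x)) (hfy : Orthonormal 𝕜 (Sum.elim f y)) :
    ∃ g : E ≃ₗᵢ[𝕜] F, ∀ i, g (e i) = f i := by
  classical
  obtain ⟨b, hb⟩ := exists_hilbertBasis_extending hex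
  obtain ⟨c, hc⟩ := exists_hilbertBasis_extending hfy
  exact ⟨b.repr.trans c.repr.symm, fun i => by
    rw [← hb, ← hc, LinearIsometryEquiv.trans_apply, b.repr_self, c.repr_symm_single]⟩

end Basis

section HilbertSum

variable {G : ι → Type*} [∀ i, NormedAddCommGroup (G i)] [∀ i, InnerProductSpace 𝕜 (G i)]
  {G' : κ → Type*} [∀ k, NormedAddCommGroup (G' k)] [∀ k, InnerProductSpace 𝕜 (G' k)]
  {V : ∀ i, G i →ₗᵢ[𝕜] E}

theorem exists_linearIsometryEquiv_of_isHilbertSum [CompleteSpace E] [CompleteSpace F]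
    {W : ∀ i, G i →ₗᵢ[𝕜] F} (hV : IsHilbertSum 𝕜 G V) (hW : IsHilbertSum 𝕜 G W) :
    ∃ g : E ≃ₗᵢ[𝕜] F, ∀ i x, g (V i x) = W i x := by
  classical
  refine ⟨hV.linearIsometryEquiv.trans hW.linearIsometryEquiv.symm, fun i x => ?_⟩
  rw [LinearIsometryEquiv.trans_apply, ← hV.linearIsometryEquiv_symm_apply_single,
    LinearIsometryEquiv.apply_symm_apply, hW.linearIsometryEquiv_symm_apply_single]

theorem topologicalClosure_iSup_range_eq_top [CompleteSpace E] [∀ i, CompleteSpace (G i)]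
    (hV : IsHilbertSum 𝕜 G V) :
    (⨆ i, LinearMap.range (V i).toLinearMap).topologicalClosure = ⊤ := by
  rw [← hV.OrthogonalFamily.range_linearIsometry, LinearMap.range_eq_top]
  exact hV.surjective_isometry

theorem isHilbertSum_comp [CompleteSpace E] [∀ i, CompleteSpace (G i)] [∀ k, CompleteSpace (G' k)]
    (hV : IsHilbertSum 𝕜 G V) (σ : κ ≃ ι) (T : ∀ k, G' k ≃ₗᵢ[𝕜] G (σ k)) :
    IsHilbertSum 𝕜 G' fun k => (V (σ k)).comp (T k).toLinearIsometry := by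
  refine IsHilbertSum.mk (fun k l hkl x y => hV.OrthogonalFamily (σ.injective.ne hkl) _ _) ?_
  have hrange (k) : LinearMap.range ((V (σ k)).comp (T k).toLinearIsometry).toLinearMap =
      LinearMap.range (V (σ k)).toLinearMap :=
    LinearMap.range_comp_of_range_eq_top _ (T k).range
  simp_rw [hrange, σ.iSup_comp (g := fun i => LinearMap.range (V i).toLinearMap),
    topologicalClosure_iSup_range_eq_top hV, le_refl]

theorem isHilbertSum_ext [CompleteSpace E] (hV : IsHilbertSum 𝕜 G V) {f g : E →L[𝕜] F}
    (h : ∀ i x, f (V i x) = g (V i x)) : f = g := by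
  ext y
  have hy := hV.hasSum_linearIsometryEquiv_symm (hV.linearIsometryEquiv y)
  rw [LinearIsometryEquiv.symm_apply_apply] at hy
  refine (hy.mapL f).unique ?_
  simpa only [h] using hy.mapL g

theorem exists_isHilbertSum [CompleteSpace E] [TopologicalSpace.SeparableSpace E]
    (hE : ¬ FiniteDimensional 𝕜 E) (ι : Type*) [Countable ι] [Nonempty ι] :
    ∃ V : ι → E →ₗᵢ[𝕜] E, IsHilbertSum 𝕜 (fun _ => E) V := by
  obtain ⟨b⟩ := nonempty_hilbertBasis hE (ι × ℕ)
  let K (i : ι) : Submodule 𝕜 E :=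
    (Submodule.span 𝕜 (Set.range fun n : ℕ => b (i, n))).topologicalClosure
  have hmem (i n) : b (i, n) ∈ K i :=
    Submodule.le_topologicalClosure _ (Submodule.subset_span ⟨n, rfl⟩)
  have hortho : OrthogonalFamily 𝕜 (fun i => K i) fun i => (K i).subtypeₗᵢ :=
    .of_pairwise fun i j hij => isOrtho_topologicalClosure <| Submodule.isOrtho_span.2 <| by
      rintro _ ⟨m, rfl⟩ _ ⟨n, rfl⟩
      exact b.orthonormal.2 (by simp [hij])
  have htotal : ⊤ ≤ (⨆ i, K i).topologicalClosure := by
    rw [← b.dense_span]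
    refine Submodule.topologicalClosure_mono (Submodule.span_le.2 ?_)
    rintro _ ⟨⟨i, n⟩, rfl⟩
    exact Submodule.mem_iSup_of_mem i (hmem i n)
  have hK (i) : Nonempty (E ≃ₗᵢ[𝕜] K i) := nonempty_linearIsometryEquiv hE <|
    not_finiteDimensional_of_orthonormal
      (b.orthonormal.comp (Prod.mk i) (Prod.mk_right_injective i)) (hmem i)
  exact ⟨_, isHilbertSum_comp (IsHilbertSum.mkInternal K hortho htotal) (Equiv.refl ι)
    fun i => (hK i).some⟩

end HilbertSum

section PointwiseStabilizer

/-- The group of linear isometries of `E` onto itself that fix every vector of `s`. -/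
def pointwiseStabilizer (𝕜 : Type*) {E : Type*} [RCLike 𝕜] [NormedAddCommGroup E]
    [InnerProductSpace 𝕜 E] (s : Set E) : Subgroup (E ≃ₗᵢ[𝕜] E) where
  carrier := {g | ∀ x ∈ s, g x = x}
  mul_mem' := fun {g h} hg hh x hx => by
    rw [LinearIsometryEquiv.coe_mul, Function.comp_apply, hh x hx, hg x hx]
  one_mem' := fun _ _ => rfl
  inv_mem' := fun {g} hg x hx => g.symm_apply_eq.2 (hg x hx).symm

theorem mem_pointwiseStabilizer_range {e : ι → E} {g : E ≃ₗᵢ[𝕜] E} :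
    g ∈ pointwiseStabilizer 𝕜 (Set.range e) ↔ ∀ i, g (e i) = e i :=
  Set.forall_mem_range

theorem conj_mem_pointwiseStabilizer_range {e f : ι → E} {g h : E ≃ₗᵢ[𝕜] E}
    (hg : g ∈ pointwiseStabilizer 𝕜 (Set.range e)) (hh : ∀ i, h (e i) = f i) :
    h * g * h⁻¹ ∈ pointwiseStabilizer 𝕜 (Set.range f) := by
  rw [mem_pointwiseStabilizer_range] at hg ⊢
  intro i
  have hi : h.symm (f i) = e i := h.symm_apply_eq.2 (hh i).symm
  simp [hi, hg, hh]

theorem pointwiseStabilizer_range_hilbertBasis_le {K : Submodule 𝕜 E} (b : HilbertBasis ι 𝕜 K) :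
    pointwiseStabilizer 𝕜 (Set.range fun i => (b i : E)) ≤ pointwiseStabilizer 𝕜 (K : Set E) := by
  intro g hg x hx
  have hdense : Dense (Submodule.span 𝕜 (Set.range b) : Set K) :=
    Submodule.dense_iff_topologicalClosure_eq_top.2 b.dense_span
  have hgK : (g : E →L[𝕜] E) ∘L K.subtypeL = K.subtypeL :=
    ContinuousLinearMap.ext_on hdense <| by
      rintro _ ⟨i, rfl⟩
      exact hg _ ⟨i, rfl⟩
  exact DFunLike.congr_fun hgK ⟨x, hx⟩

theorem exists_apply_comp_of_mem_pointwiseStabilizer [CompleteSpace F] {V : F →ₗᵢ[𝕜] E}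
    {g : E ≃ₗᵢ[𝕜] E}
    (hg : g ∈ pointwiseStabilizer 𝕜 ((LinearMap.range V.toLinearMap)ᗮ : Set E)) :
    ∃ v : F ≃ₗᵢ[𝕜] F, ∀ x, g (V x) = V (v x) := by
  set R := LinearMap.range V.toLinearMap
  have : CompleteSpace R := V.isometry.isUniformInducing.isComplete_range.completeSpace_coe
  have hperp : Rᗮ.map (g.toLinearEquiv : E →ₗ[𝕜] E) = Rᗮ := by
    refine le_antisymm ?_ fun x hx => ⟨x, hx, hg x hx⟩
    rintro _ ⟨x, hx, rfl⟩
    exact (hg x hx).symm ▸ hx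
  have hmap : R.map (g.toLinearEquiv : E →ₗ[𝕜] E) = R := by
    rw [← R.orthogonal_orthogonal, Submodule.map_orthogonal_equiv, hperp]
  let gR : R ≃ₗᵢ[𝕜] R := (g.submoduleMap R).trans (LinearIsometryEquiv.ofEq _ _ hmap)
  refine ⟨V.equivRange.trans (gR.trans V.equivRange.symm), fun x => ?_⟩
  exact congrArg Subtype.val (V.equivRange.apply_symm_apply (gR (V.equivRange x))).symm

end PointwiseStabilizer

section Commutator

open scoped commutatorElement

variable [CompleteSpace E]

theorem eq_commutatorElement_of_apply [DecidableEq κ] {V : κ × ℤ → F →ₗᵢ[𝕜] E}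
    (hV : IsHilbertSum 𝕜 (fun _ : κ × ℤ => F) V) {v : κ → F ≃ₗᵢ[𝕜] F} {D S g : E ≃ₗᵢ[𝕜] E} {n : κ}
    (hD : ∀ i x, D (V i x) = V i (if 0 ≤ i.2 then v i.1 x else x))
    (hS : ∀ i x, S (V i x) = V (Equiv.Perm.prodExtendRight n (Equiv.addRight (1 : ℤ)) i) x)
    (hg : ∀ i ≠ (n, 0), ∀ x, g (V i x) = V i x) (hgn : ∀ x, g (V (n, 0) x) = V (n, 0) (v n x)) :
    g = ⁅D, S⁆ := by
  suffices h : D * S = g * S * D by rw [commutatorElement_def, h]; group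
  refine LinearIsometryEquiv.ext fun y => DFunLike.congr_fun (isHilbertSum_ext hV
    (f := ((D * S : E ≃ₗᵢ[𝕜] E) : E →L[𝕜] E)) (g := ((g * S * D : E ≃ₗᵢ[𝕜] E) : E →L[𝕜] E)) ?_) y
  rintro ⟨m, k⟩ x
  change D (S (V (m, k) x)) = g (S (D (V (m, k) x)))
  rw [hS, hD, hD, hS]
  obtain rfl | hm := eq_or_ne m n
  · rw [Equiv.Perm.prodExtendRight_apply_eq, Equiv.coe_addRight]
    obtain rfl | hk := eq_or_ne k (-1)
    · -- The shift moves the block `(n, -1)`, where `D` is trivial, to `(n, 0)`, where `D` is `v n`.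
      simp [hgn]
    · have hk' : 0 ≤ k + 1 ↔ 0 ≤ k := by lia
      simp only [hk', hg (m, k + 1) (by simpa [add_eq_zero_iff_eq_neg] using hk)]
  · rw [Equiv.Perm.prodExtendRight_apply_ne _ hm, hg (m, k) (by simp [hm])]

theorem exists_bddAbove_image_pointwiseStabilizer_orthogonal_range [CompleteSpace F]
    {V : ℕ × ℤ → F →ₗᵢ[𝕜] E} (hV : IsHilbertSum 𝕜 (fun _ : ℕ × ℤ => F) V)
    (p : GroupSeminorm (E ≃ₗᵢ[𝕜] E)) :
    ∃ i, BddAbove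
      (p '' pointwiseStabilizer 𝕜 ((LinearMap.range (V i).toLinearMap)ᗮ : Set E)) := by
  have hdiag (v : ℕ → F ≃ₗᵢ[𝕜] F) :
      ∃ D : E ≃ₗᵢ[𝕜] E, ∀ i x, D (V i x) = V i (if 0 ≤ i.2 then v i.1 x else x) := by
    obtain ⟨D, hD⟩ := exists_linearIsometryEquiv_of_isHilbertSum hV
      (isHilbertSum_comp hV (Equiv.refl _) fun i => if 0 ≤ i.2 then v i.1 else 1)
    refine ⟨D, fun i x => (hD i x).trans ?_⟩
    split_ifs <;> simp [*]
  choose D hD using hdiag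
  obtain ⟨n, hn⟩ := exists_nat_forall_exists_apply_eq_and_le fun v => p (D v)
  obtain ⟨S, hS⟩ := exists_linearIsometryEquiv_of_isHilbertSum hV (isHilbertSum_comp hV
    (Equiv.Perm.prodExtendRight n (Equiv.addRight (1 : ℤ))) fun _ => .refl 𝕜 F)
  refine ⟨(n, 0), 2 * n + 2 * p S, ?_⟩
  rintro _ ⟨g, hg, rfl⟩
  obtain ⟨v, hv⟩ := exists_apply_comp_of_mem_pointwiseStabilizer hg
  obtain ⟨w, rfl, hw⟩ := hn v
  have hfix : ∀ i ≠ (n, 0), ∀ x, g (V i x) = V i x := fun i hi x => hg _ <| by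
    rintro _ ⟨y, rfl⟩
    exact hV.OrthogonalFamily hi.symm y x
  rw [eq_commutatorElement_of_apply hV (hD w) hS hfix hv]
  calc p ⁅D w, S⁆ ≤ p (D w) + p S + p (D w)⁻¹ + p S⁻¹ := by
        grw [commutatorElement_def, map_mul_le_add, map_mul_le_add, map_mul_le_add]
    _ = 2 * p (D w) + 2 * p S := by rw [map_inv_eq_map, map_inv_eq_map]; ring
    _ ≤ 2 * n + 2 * p S := by grw [hw]

end Commutator

section LengthFunction

theorem le_of_mem_pointwiseStabilizer_range {p : GroupSeminorm (E ≃ₗᵢ[𝕜] E)} {e f : ι → E}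
    {g h : E ≃ₗᵢ[𝕜] E} {C : ℝ} (hC : ∀ k ∈ pointwiseStabilizer 𝕜 (Set.range f), p k ≤ C)
    (hh : ∀ i, h (e i) = f i) (hg : g ∈ pointwiseStabilizer 𝕜 (Set.range e)) :
    p g ≤ 2 * p h + C :=
  (le_two_mul_add_conj p h g).trans <| by
    grw [hC _ (conj_mem_pointwiseStabilizer_range hg hh)]

variable [CompleteSpace E] [TopologicalSpace.SeparableSpace E]

theorem exists_orthonormal_bddAbove_image_pointwiseStabilizer (hE : ¬ FiniteDimensional 𝕜 E)
    (p : GroupSeminorm (E ≃ₗᵢ[𝕜] E)) :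
    ∃ a x : ℕ → E, Orthonormal 𝕜 (Sum.elim a x) ∧
      BddAbove (p '' pointwiseStabilizer 𝕜 (Set.range a)) := by
  obtain ⟨V, hV⟩ := exists_isHilbertSum hE (ℕ × ℤ)
  obtain ⟨i, hi⟩ := exists_bddAbove_image_pointwiseStabilizer_orthogonal_range hV p
  obtain ⟨b⟩ := nonempty_hilbertBasis hE ℕ
  obtain ⟨j, hij⟩ := exists_ne i
  set R := LinearMap.range (V i).toLinearMap
  have hR : ¬ FiniteDimensional 𝕜 Rᗮ := by
    refine not_finiteDimensional_of_orthonormal (b.orthonormal.comp_linearIsometry (V j)) ?_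
    rintro n _ ⟨y, rfl⟩
    exact hV.OrthogonalFamily hij.symm y (b n)
  obtain ⟨a⟩ := nonempty_hilbertBasis hR ℕ
  refine ⟨fun n => a n, fun n => V i (b n), orthonormal_sumElim_iff.2
    ⟨a.orthonormal.comp_linearIsometry Rᗮ.subtypeₗᵢ,
      b.orthonormal.comp_linearIsometry (V i), fun m n => ?_⟩,
    hi.mono (Set.image_mono (pointwiseStabilizer_range_hilbertBasis_le a))⟩
  exact Submodule.inner_left_of_mem_orthogonal (K := R) ⟨b n, rfl⟩ (a m).2

theorem exists_forall_mem_pointwiseStabilizer_le {a x : ℕ → E}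
    (hax : Orthonormal 𝕜 (Sum.elim a x)) (p : GroupSeminorm (E ≃ₗᵢ[𝕜] E)) :
    ∃ C, ∀ g ∈ pointwiseStabilizer 𝕜 (Set.range a), p g ≤ C := by
  have hE : ¬ FiniteDimensional 𝕜 E := fun _ =>
    not_finite_iff_infinite.2 inferInstance hax.linearIndependent.finite
  obtain ⟨b, y, hby, C, hC⟩ := exists_orthonormal_bddAbove_image_pointwiseStabilizer hE p
  obtain ⟨h, hh⟩ := exists_linearIsometryEquiv_apply_eq hax hby
  exact ⟨2 * p h + C, fun g => le_of_mem_pointwiseStabilizer_range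
    (fun k hk => hC (Set.mem_image_of_mem p hk)) hh⟩

theorem exists_mem_pointwiseStabilizer_apply_eq {a : ι → E} {c y : κ → E} {b : ℕ → E}
    (hacb : Orthonormal 𝕜 (Sum.elim (Sum.elim a c) b)) (hy : Orthonormal 𝕜 y)
    (hyc : ∀ n, y n ∈ Submodule.span 𝕜 (Set.range c)) :
    ∃ h ∈ pointwiseStabilizer 𝕜 (Set.range a), ∀ n, h (y n) = c n := by
  have hayb : Orthonormal 𝕜 (Sum.elim (Sum.elim a y) b) := orthonormal_sumElim_right_comm.1 <|
    orthonormal_sumElim_of_mem_span (orthonormal_sumElim_right_comm.1 hacb) hy hyc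
  obtain ⟨h, hh⟩ := exists_linearIsometryEquiv_apply_eq hayb hacb
  exact ⟨h, mem_pointwiseStabilizer_range.2 fun i => hh (.inl i), fun n => hh (.inr n)⟩

theorem le_of_mem_pointwiseStabilizer_of_mem_span {p : GroupSeminorm (E ≃ₗᵢ[𝕜] E)}
    {a : ι → E} {c y : κ → E} {b : ℕ → E} (hacb : Orthonormal 𝕜 (Sum.elim (Sum.elim a c) b))
    {α γ : ℝ}
    (hα : ∀ g ∈ pointwiseStabilizer 𝕜 (Set.range a), p g ≤ α)
    (hγ : ∀ g ∈ pointwiseStabilizer 𝕜 (Set.range c), p g ≤ γ) (hy : Orthonormal 𝕜 y)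
    (hyc : ∀ n, y n ∈ Submodule.span 𝕜 (Set.range c)) {g : E ≃ₗᵢ[𝕜] E}
    (hg : g ∈ pointwiseStabilizer 𝕜 (Set.range y)) : p g ≤ 2 * α + γ := by
  obtain ⟨h, hha, hh⟩ := exists_mem_pointwiseStabilizer_apply_eq hacb hy hyc
  grw [le_of_mem_pointwiseStabilizer_range hγ hh hg, hα h hha]

theorem exists_mem_pointwiseStabilizer_eq_inv_mul {u : E ≃ₗᵢ[𝕜] E} {x : ι → E} {y : κ ⊕ ℕ → E}
    (h : Orthonormal 𝕜 (Sum.elim y x)) (hu : Orthonormal 𝕜 (Sum.elim y (u ∘ x))) :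
    ∃ v ∈ pointwiseStabilizer 𝕜 (Set.range (y ∘ Sum.inl)),
      ∃ w ∈ pointwiseStabilizer 𝕜 (Set.range x), u = v⁻¹ * w := by
  rw [← Sum.elim_comp_inl_inr y, orthonormal_sumElim_right_comm] at h hu
  obtain ⟨v, hv⟩ := exists_linearIsometryEquiv_apply_eq hu h
  exact ⟨v, mem_pointwiseStabilizer_range.2 fun i => hv (.inl i), v * u,
    mem_pointwiseStabilizer_range.2 fun i => hv (.inr i), (inv_mul_cancel_left v u).symm⟩

theorem exists_orthonormal_eq_inv_mul [Infinite ι] [Infinite κ] {a : ι → E} {c : κ → E}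
    (hac : Orthonormal 𝕜 (Sum.elim a c)) (u : E ≃ₗᵢ[𝕜] E) :
    ∃ x y : ℕ → E, Orthonormal 𝕜 x ∧ Orthonormal 𝕜 y ∧
      (∀ n, x n ∈ Submodule.span 𝕜 (Set.range a)) ∧ (∀ n, y n ∈ Submodule.span 𝕜 (Set.range c)) ∧
      ∃ v ∈ pointwiseStabilizer 𝕜 (Set.range y), ∃ w ∈ pointwiseStabilizer 𝕜 (Set.range x),
        u = v⁻¹ * w := by
  obtain ⟨ha, hc, -⟩ := orthonormal_sumElim_iff.1 hac
  obtain ⟨x, z, hx, hz, hxa, hzc, hxz⟩ := exists_orthonormal_inner_apply_eq_zero (u : E →L[𝕜] E)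
    (not_finiteDimensional_of_orthonormal ha fun n => Submodule.subset_span (Set.mem_range_self n))
    (not_finiteDimensional_of_orthonormal hc fun n => Submodule.subset_span (Set.mem_range_self n))
  -- Half of the vectors `z n` are set aside to leave room for extending isometries.
  let y : ℕ ⊕ ℕ → E := z ∘ Equiv.natSumNatEquivNat
  have hy : Orthonormal 𝕜 y := hz.comp _ Equiv.natSumNatEquivNat.injective
  have haz : Orthonormal 𝕜 (Sum.elim a y) := orthonormal_sumElim_of_mem_span hac hy fun n => hzc _
  have hyx : Orthonormal 𝕜 (Sum.elim y x) :=
    orthonormal_sumElim_of_mem_span (orthonormal_sumElim_comm.1 haz) hx hxa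
  have hyux : Orthonormal 𝕜 (Sum.elim y (u ∘ x)) := orthonormal_sumElim_comm.1 <|
    orthonormal_sumElim_iff.2
      ⟨hx.comp_linearIsometry u.toLinearIsometry, hy, fun m n => hxz m _⟩
  exact ⟨x, y ∘ Sum.inl, hx, hy.comp _ Sum.inl_injective, hxa, fun n => hzc _,
    exists_mem_pointwiseStabilizer_eq_inv_mul hyx hyux⟩

theorem exists_orthonormal_sumElim_sumElim (hE : ¬ FiniteDimensional 𝕜 E) :
    ∃ a c b : ℕ → E, Orthonormal 𝕜 (Sum.elim (Sum.elim a c) b) := by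
  obtain ⟨B⟩ := nonempty_hilbertBasis hE ((ℕ ⊕ ℕ) ⊕ ℕ)
  refine ⟨B ∘ .inl ∘ .inl, B ∘ .inl ∘ .inr, B ∘ .inr, ?_⟩
  convert B.orthonormal
  ext ((n | n) | n) <;> rfl

theorem isStronglyBounded_linearIsometryEquiv (hE : ¬ FiniteDimensional 𝕜 E) :
    IsStronglyBounded (E ≃ₗᵢ[𝕜] E) := by
  intro p
  obtain ⟨a, c, b, hacb⟩ := exists_orthonormal_sumElim_sumElim hE
  have hcab : Orthonormal 𝕜 (Sum.elim (Sum.elim c a) b) := orthonormal_sumElim_left_comm.1 hacb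
  have hac : Orthonormal 𝕜 (Sum.elim a c) := (orthonormal_sumElim_iff.1 hacb).1
  obtain ⟨α, hα⟩ := exists_forall_mem_pointwiseStabilizer_le hac p
  obtain ⟨γ, hγ⟩ := exists_forall_mem_pointwiseStabilizer_le (orthonormal_sumElim_comm.1 hac) p
  refine ⟨(2 * α + γ) + (2 * γ + α), ?_⟩
  rintro _ ⟨u, rfl⟩
  obtain ⟨x, y, hx, hy, hxa, hyc, v, hv, w, hw, rfl⟩ := exists_orthonormal_eq_inv_mul hac u
  calc p (v⁻¹ * w) ≤ p v + p w := by grw [map_mul_le_add, map_inv_eq_map]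
    _ ≤ (2 * α + γ) + (2 * γ + α) := add_le_add
      (le_of_mem_pointwiseStabilizer_of_mem_span hacb hα hγ hy hyc hv)
      (le_of_mem_pointwiseStabilizer_of_mem_span hcab hγ hα hx hxa hw)

end LengthFunction

end HilbertSpace

theorem isStronglyBounded_unitary {𝕜 H : Type*} [RCLike 𝕜] [NormedAddCommGroup H]
    [InnerProductSpace 𝕜 H] [CompleteSpace H] [TopologicalSpace.SeparableSpace H]
    (hH : ¬ FiniteDimensional 𝕜 H) : IsStronglyBounded (unitary (H →L[𝕜] H)) :=
  (isStronglyBounded_linearIsometryEquiv hH).of_surjective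
    (f := (Unitary.linearIsometryEquiv (𝕜 := 𝕜) (H := H)).symm.toMonoidHom)
    Unitary.linearIsometryEquiv.symm.surjective

theorem exists_bounded_generation_over_sot_closed_general {𝕜 H : Type*} [RCLike 𝕜]
    [NormedAddCommGroup H] [InnerProductSpace 𝕜 H] [CompleteSpace H]
    [TopologicalSpace.SeparableSpace H] (hH : ¬ FiniteDimensional 𝕜 H)
    (F : Set (unitary (H →L[𝕜] H))) (hFsymm : F⁻¹ = F) (U : ℕ → unitary (H →L[𝕜] H))
    (hgen : Subgroup.closure (F ∪ Set.range U) = ⊤) :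
    ∃ n : ℕ,
      (F ∪ {1} ∪ ⋃ i ∈ Finset.range (n + 1), {U i, (U i)⁻¹}) ^ n = Set.univ :=
  (isStronglyBounded_unitary hH).exists_pow_union_eq_univ hFsymm U hgen

theorem exists_bounded_generation_over_sot_closed
    (H : Type*) [NormedAddCommGroup H] [InnerProductSpace ℂ H] [CompleteSpace H]
    [TopologicalSpace.SeparableSpace H] (hH : ¬ FiniteDimensional ℂ H)
    (F : Set (unitary (H →L[ℂ] H)))
    (hFsymm : F⁻¹ = F)
    -- `F` is closed in the strong operator topology: it contains every unitary that can
    -- be approximated by members of `F` uniformly on finitely many vectors.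
    (hFclosed : ∀ T : unitary (H →L[ℂ] H),
      (∀ (s : Finset H) (ε : ℝ), 0 < ε →
        ∃ S ∈ F, ∀ x ∈ s, ‖(S : H →L[ℂ] H) x - (T : H →L[ℂ] H) x‖ < ε) → T ∈ F)
    (U : ℕ → unitary (H →L[ℂ] H))
    (hgen : Subgroup.closure (F ∪ Set.range U) = ⊤) :
    ∃ n : ℕ,
      (F ∪ {1} ∪ ⋃ i ∈ Finset.range (n + 1), {U i, (U i)⁻¹}) ^ n = Set.univ :=
  exists_bounded_generation_over_sot_closed_general hH F hFsymm U hgen
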